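/- Let Γ be a distance-regular graph with intersection numbers c_1 = 1, and suppose its second largest distinct adjacency eigenvalue θ_1 (the maximum of the adjacency eigenvalues different from the valency k) is of classical q-type for some nonzero real number q. If Γ contains an induced complete bipartite subgraph K_{r,r} for some integer r ≥ 2, then q ≥ r − 1. -/

import Mathlib

/-- `G` is a distance-regular graph of diameter `D` with intersection numbers
`p h i j = p^h_{ij}`: for any two vertices `x, y` at distance `h`, the number of
vertices `z` with `d(x,z) = i` and `d(y,z) = j` equals `p h i j`. -/
structure IsDRG {V : Type*} [Fintype V] (G : SimpleGraph V) (D : ℕ)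
    (p : ℕ → ℕ → ℕ → ℕ) : Prop where
  connected : G.Connected
  dist_le : ∀ x y : V, G.dist x y ≤ D
  exists_dist_eq : ∃ x y : V, G.dist x y = D
  inter : ∀ h i j : ℕ, h ≤ D → i ≤ D → j ≤ D → ∀ x y : V, G.dist x y = h →
    {z : V | G.dist x z = i ∧ G.dist y z = j}.ncard = p h i j

/-- `u` is the standard sequence of `θ` for a distance-regular graph with
intersection numbers `p` (so valency `k = b₀ = p 0 1 1`, `cᵢ = p i 1 (i-1)`,
`aᵢ = p i 1 i`, `bᵢ = p i 1 (i+1)`). -/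
def IsStdSeq (D : ℕ) (p : ℕ → ℕ → ℕ → ℕ) (θ : ℝ) (u : ℕ → ℝ) : Prop :=
  u 0 = 1 ∧ u 1 = θ / (p 0 1 1 : ℝ) ∧
    ∀ i : ℕ, 1 ≤ i → i ≤ D - 1 →
      (p i 1 (i - 1) : ℝ) * u (i - 1) + (p i 1 i : ℝ) * u i
          + (p i 1 (i + 1) : ℝ) * u (i + 1) = θ * u i

/-- The sequence `u` (a standard sequence) is of classical `q`-type:
`u i = (1/q) * u (i-1) + c` for `i = 1, …, D`, for some real `c`. -/
def IsClassicalQType (D : ℕ) (q : ℝ) (u : ℕ → ℝ) : Prop :=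
  ∃ c : ℝ, ∀ i : ℕ, 1 ≤ i → i ≤ D → u i = (1 / q) * u (i - 1) + c

/-- `θ` is an eigenvalue of the adjacency matrix of `G`. -/
def IsAdjEigenval {V : Type*} [Fintype V] (G : SimpleGraph V) [DecidableRel G.Adj]
    (θ : ℝ) : Prop :=
  ∃ v : V → ℝ, v ≠ 0 ∧ (G.adjMatrix ℝ).mulVec v = θ • v

/-!
The matrix with entries `u (d(x, y))` is a positive multiple of the idempotent of `θ₁`, hence
positive semidefinite. Testing it on the vector that is `1` on one side of `K_{r,r}` and `-1` on the
other gives `(r - 1) (u₁ - u₂) ≤ u₀ - u₁`. Being of classical `q`-type turns `u₀ - u₁` into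
`q (u₁ - u₂)`, so it remains to cancel `u₁ - u₂ > 0`. The recursion at distance `1` gives
`b₁ (u₁ - u₂) = (1 + θ₁) (1 - u₁)`, which is positive as soon as `θ₁ > -1`. Finally `θ₁ ≥ 0`: for a
suitable multiple `cJ` of the all-ones matrix, `θ₁ I - A + cJ` is positive semidefinite, and its
quadratic form at `e_a - e_b`, for distinct nonadjacent `a` and `b`, is `2 θ₁`.
-/

open Finset Matrix

section Metric

variable {V : Type*} {G : SimpleGraph V}

lemma exists_adj_dist_eq_of_dist_eq_add_one {x y : V} {i : ℕ} (h : G.dist x y = i + 1) :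
    ∃ z, G.Adj y z ∧ G.dist x z = i := by
  obtain ⟨W, hW⟩ := G.exists_walk_of_dist_ne_zero (u := y) (v := x) (by rw [G.dist_comm]; omega)
  rw [G.dist_comm, h] at hW
  cases W with
  | nil => simp at hW
  | @cons _ z _ hyz W' =>
    have hzx : G.dist x z ≤ W'.length := G.dist_comm (u := z) ▸ SimpleGraph.dist_le W'
    have hdiff := hyz.diff_dist_adj (u := x)
    rw [SimpleGraph.Walk.length_cons] at hW
    exact ⟨z, hyz, by omega⟩

lemma exists_dist_eq_of_le {x y : V} {i : ℕ} (hi : i ≤ G.dist x y) : ∃ z, G.dist x z = i := by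
  induction hi using Nat.decreasingInduction with
  | self => exact ⟨y, rfl⟩
  | of_succ i _ ih =>
    obtain ⟨z, hz⟩ := ih
    obtain ⟨z', -, hz'⟩ := exists_adj_dist_eq_of_dist_eq_add_one hz
    exact ⟨z', hz'⟩

lemma dist_eq_two_of_adj_of_adj {x y z : V} (hne : x ≠ y) (hxy : ¬ G.Adj x y) (hxz : G.Adj x z)
    (hzy : G.Adj z y) : G.dist x y = 2 := by
  have hle : G.dist x y ≤ 2 := SimpleGraph.dist_le (.cons hxz (.cons hzy .nil))
  have hlt := (hxz.reachable.trans hzy.reachable).one_lt_dist_of_ne_of_not_adj hne hxy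
  omega

end Metric

/-- The distance-`i` matrix `Aᵢ` of `G`. -/
noncomputable def distMatrix {V : Type*} (G : SimpleGraph V) (i : ℕ) : Matrix V V ℝ :=
  of fun x y => if G.dist x y = i then 1 else 0

/-- The element `∑ i, f i • Aᵢ` of the Bose–Mesner algebra of `G`, encoded by its entries
`f (d(x, y))`. For the standard sequence `f` of an eigenvalue it is a multiple of a primitive
idempotent. -/
noncomputable def boseMesnerMatrix {V : Type*} (G : SimpleGraph V) (f : ℕ → ℝ) : Matrix V V ℝ :=
  of fun x y => f (G.dist x y)

lemma distMatrix_zero {V : Type*} [DecidableEq V] {G : SimpleGraph V} (hG : G.Connected) :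
    distMatrix G 0 = 1 := by
  ext x y
  simp [distMatrix, one_apply, hG.dist_eq_zero_iff]

lemma distMatrix_one {V : Type*} (G : SimpleGraph V) [DecidableRel G.Adj] :
    distMatrix G 1 = G.adjMatrix ℝ := by
  ext x y
  simp [distMatrix, SimpleGraph.adjMatrix_apply, SimpleGraph.dist_eq_one_iff_adj]

lemma isHermitian_boseMesnerMatrix {V : Type*} (G : SimpleGraph V) (f : ℕ → ℝ) :
    (boseMesnerMatrix G f).IsHermitian := by
  ext x y
  simp [boseMesnerMatrix, G.dist_comm]

namespace IsDRG

variable {V : Type*} [Fintype V] {G : SimpleGraph V} {D h i j : ℕ} {p : ℕ → ℕ → ℕ → ℕ}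

lemma card_dist_eq_and_dist_eq (hd : IsDRG G D p) (hi : i ≤ D) (hj : j ≤ D) (x y : V) :
    #{z | G.dist x z = i ∧ G.dist y z = j} = p (G.dist x y) i j := by
  rw [← hd.inter _ i j (hd.dist_le x y) hi hj x y rfl, ← Set.ncard_coe_finset]
  simp

lemma card_dist_eq (hd : IsDRG G D p) (hi : i ≤ D) (x : V) : #{z | G.dist x z = i} = p 0 i i := by
  simpa using hd.card_dist_eq_and_dist_eq hi hi x x

lemma exists_dist_eq_left (hd : IsDRG G D p) (hi : i ≤ D) : ∃ x y, G.dist x y = i := by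
  obtain ⟨x, y, hxy⟩ := hd.exists_dist_eq
  exact ⟨x, exists_dist_eq_of_le (hxy ▸ hi)⟩

lemma valency_pos (hd : IsDRG G D p) (hi : i ≤ D) : 0 < p 0 i i := by
  obtain ⟨x, y, hxy⟩ := hd.exists_dist_eq_left hi
  rw [← hd.card_dist_eq hi x, card_pos]
  exact ⟨y, by simp [hxy]⟩

lemma valency_zero (hd : IsDRG G D p) : p 0 0 0 = 1 := by
  obtain ⟨x, -⟩ := hd.exists_dist_eq
  rw [← hd.card_dist_eq (Nat.zero_le D) x, card_eq_one]
  exact ⟨x, by ext z; simp [hd.connected.dist_eq_zero_iff, eq_comm]⟩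

lemma one_le_diam_of_adj (hd : IsDRG G D p) {x y : V} (hxy : G.Adj x y) : 1 ≤ D :=
  SimpleGraph.dist_eq_one_iff_adj.2 hxy ▸ hd.dist_le x y

lemma isRegularOfDegree [DecidableRel G.Adj] (hd : IsDRG G D p) (hD : 1 ≤ D) :
    G.IsRegularOfDegree (p 0 1 1) := by
  intro x
  rw [← hd.card_dist_eq hD x, ← SimpleGraph.card_neighborFinset_eq_degree,
    SimpleGraph.neighborFinset_eq_filter]
  simp only [SimpleGraph.dist_eq_one_iff_adj]

-- Count the pairs `(z, z')` with `d(x, z) = h`, `d(x, z') = i` and `d(z, z') = j`.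
lemma valency_mul_inter (hd : IsDRG G D p) (hh : h ≤ D) (hi : i ≤ D) (hj : j ≤ D) :
    p 0 h h * p h j i = p 0 i i * p i j h := by
  obtain ⟨x, -⟩ := hd.exists_dist_eq
  rw [← hd.card_dist_eq hh x, ← hd.card_dist_eq hi x]
  refine card_mul_eq_card_mul (fun z z' => G.dist z z' = j) (fun z hz => ?_) (fun z' hz' => ?_)
  · rw [← (mem_filter.1 hz).2, G.dist_comm, ← hd.card_dist_eq_and_dist_eq hj hi z x,
      bipartiteAbove, filter_filter]
    simp only [and_comm]
  · rw [← (mem_filter.1 hz').2, G.dist_comm, ← hd.card_dist_eq_and_dist_eq hj hh z' x,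
      bipartiteBelow, filter_filter]
    simp only [and_comm, G.dist_comm (v := z')]

lemma inter_succ_one_pos (hd : IsDRG G D p) (hi : i + 1 ≤ D) : 0 < p (i + 1) 1 i := by
  obtain ⟨y, x, hyx⟩ := hd.exists_dist_eq_left hi
  obtain ⟨z, hxz, hz⟩ := exists_adj_dist_eq_of_dist_eq_add_one hyx
  rw [← hyx, G.dist_comm, ← hd.card_dist_eq_and_dist_eq (by omega) (by omega) x y, card_pos]
  exact ⟨z, by simp [SimpleGraph.dist_eq_one_iff_adj.2 hxz, hz]⟩

lemma inter_one_eq_zero (hd : IsDRG G D p) (hD : 1 ≤ D) (hh : h ≤ D) (hi : i ≤ D)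
    (hhi : h + 1 < i ∨ i + 1 < h) : p h 1 i = 0 := by
  obtain ⟨x, y, rfl⟩ := hd.exists_dist_eq_left hh
  rw [← hd.card_dist_eq_and_dist_eq hD hi x y, card_eq_zero, filter_eq_empty_iff]
  rintro z - ⟨hxz, hyz⟩
  have hdiff := (SimpleGraph.dist_eq_one_iff_adj.1 hxz).diff_dist_adj (u := y)
  rw [G.dist_comm (v := x)] at hdiff
  omega

lemma inter_one_one_zero (hd : IsDRG G D p) (hD : 1 ≤ D) : p 1 1 0 = 1 := by
  have hk := hd.valency_mul_inter (h := 1) (i := 0) hD (Nat.zero_le D) hD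
  rw [hd.valency_zero, one_mul] at hk
  exact Nat.eq_of_mul_eq_mul_left (hd.valency_pos hD) (by rw [hk, mul_one])

lemma inter_one_add_inter_one_add_inter_one (hd : IsDRG G D p) (hi : i + 2 ≤ D) :
    p (i + 1) 1 i + p (i + 1) 1 (i + 1) + p (i + 1) 1 (i + 2) = p 0 1 1 := by
  obtain ⟨x, y, hxy⟩ := hd.exists_dist_eq_left (i := i + 1) (by omega)
  have hmaps : Set.MapsTo (G.dist y) ({z | G.dist x z = 1} : Finset V)
      ({i, i + 1, i + 2} : Finset ℕ) := by
    intro z hz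
    have hdiff := (SimpleGraph.dist_eq_one_iff_adj.1 (mem_filter.1 hz).2).diff_dist_adj (u := y)
    rw [G.dist_comm (v := x), hxy] at hdiff
    simp only [coe_insert, coe_singleton, Set.mem_insert_iff, Set.mem_singleton_iff]
    omega
  rw [← hd.card_dist_eq (by omega) x, card_eq_sum_card_fiberwise hmaps]
  simp only [filter_filter]
  have hcard {j : ℕ} (hj : j ≤ D) : #{z | G.dist x z = 1 ∧ G.dist y z = j} = p (i + 1) 1 j := by
    rw [hd.card_dist_eq_and_dist_eq (by omega) hj, hxy]
  rw [sum_insert (by simp), sum_insert (by simp), sum_singleton, hcard (by omega),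
    hcard (by omega), hcard hi, add_assoc]

lemma distMatrix_mul_distMatrix (hd : IsDRG G D p) (hi : i ≤ D) (hj : j ≤ D) :
    distMatrix G i * distMatrix G j = boseMesnerMatrix G fun h => (p h i j : ℝ) := by
  ext x y
  simp only [mul_apply, distMatrix, boseMesnerMatrix, of_apply, ite_zero_mul_ite_zero, mul_one,
    sum_boole, G.dist_comm (v := y), hd.card_dist_eq_and_dist_eq hi hj]

lemma boseMesnerMatrix_eq_sum (hd : IsDRG G D p) (f : ℕ → ℝ) :
    boseMesnerMatrix G f = ∑ i ∈ range (D + 1), f i • distMatrix G i := by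
  ext x y
  have hxy := hd.dist_le x y
  simp only [boseMesnerMatrix, distMatrix, of_apply, Matrix.sum_apply, Matrix.smul_apply,
    smul_eq_mul, mul_ite, mul_one, mul_zero, sum_ite_eq, mem_range]
  rw [if_pos (by omega)]

lemma distMatrix_one_mul_distMatrix_succ (hd : IsDRG G D p) (hi : i + 2 ≤ D) :
    distMatrix G 1 * distMatrix G (i + 1) = (p i 1 (i + 1) : ℝ) • distMatrix G i
      + (p (i + 1) 1 (i + 1) : ℝ) • distMatrix G (i + 1)
      + (p (i + 2) 1 (i + 1) : ℝ) • distMatrix G (i + 2) := by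
  rw [hd.distMatrix_mul_distMatrix (by omega) (by omega)]
  ext x y
  have hxy := hd.dist_le x y
  simp only [boseMesnerMatrix, distMatrix, Matrix.add_apply, Matrix.smul_apply, of_apply,
    smul_eq_mul]
  obtain h | h | h | h : G.dist x y = i ∨ G.dist x y = i + 1 ∨ G.dist x y = i + 2 ∨
      (G.dist x y + 1 < i + 1 ∨ i + 1 + 1 < G.dist x y) := by omega
  · simp [h]
  · simp [h]
  · simp [h]
  · rw [hd.inter_one_eq_zero (by omega) hxy (by omega) h, if_neg (by omega), if_neg (by omega),
      if_neg (by omega)]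
    simp

variable {θ : ℝ} {u : ℕ → ℝ}

lemma distMatrix_mulVec_of_isStdSeq (hd : IsDRG G D p) (hu : IsStdSeq D p θ u) {w : V → ℝ}
    (hw : distMatrix G 1 *ᵥ w = θ • w) (hi : i ≤ D) :
    distMatrix G i *ᵥ w = (p 0 i i * u i : ℝ) • w := by
  classical
  obtain ⟨hu₀, hu₁, hrec⟩ := hu
  induction i using Nat.twoStepInduction with
  | zero => simp [distMatrix_zero hd.connected, hd.valency_zero, hu₀]
  | one =>
    have hk : (p 0 1 1 : ℝ) ≠ 0 := mod_cast (hd.valency_pos hi).ne'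
    rw [hw, hu₁, mul_div_cancel₀ _ hk]
  | more i ih₀ ih₁ =>
    have hthree := congrArg (· *ᵥ w) (hd.distMatrix_one_mul_distMatrix_succ hi)
    simp only [← mulVec_mulVec, add_mulVec, smul_mulVec, ih₀ (by omega), ih₁ (by omega),
      mulVec_smul, hw] at hthree
    have hk₀ : (p 0 (i + 1) (i + 1) * p (i + 1) 1 i : ℝ) = p 0 i i * p i 1 (i + 1) :=
      mod_cast hd.valency_mul_inter (by omega) (by omega) (by omega)
    have hk₂ : (p 0 (i + 1) (i + 1) * p (i + 1) 1 (i + 2) : ℝ)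
        = p 0 (i + 2) (i + 2) * p (i + 2) 1 (i + 1) :=
      mod_cast hd.valency_mul_inter (by omega) hi (by omega)
    have hc : (p (i + 2) 1 (i + 1) : ℝ) ≠ 0 := mod_cast (hd.inter_succ_one_pos hi).ne'
    ext x
    refine mul_left_cancel₀ hc ?_
    have hx := congrFun hthree x
    have hrec' := hrec (i + 1) (by omega) (by omega)
    simp only [Pi.add_apply, Pi.smul_apply, smul_eq_mul, Nat.add_sub_cancel] at hx hrec' ⊢
    linear_combination -hx - p 0 (i + 1) (i + 1) * w x * hrec' + u i * w x * hk₀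
      + u (i + 2) * w x * hk₂

-- At `h = D` the relation is not part of `IsStdSeq`: it holds because `θ` is an eigenvalue.
lemma sum_inter_one_mul_of_isStdSeq [DecidableRel G.Adj] (hd : IsDRG G D p) (hD : 1 ≤ D)
    (hu : IsStdSeq D p θ u) (hθ : IsAdjEigenval G θ) (hh : h ≤ D) :
    ∑ j ∈ range (D + 1), (p h 1 j : ℝ) * u j = θ * u h := by
  obtain ⟨w, hw₀, hw⟩ := hθ
  rw [← distMatrix_one] at hw
  have hk : (p 0 h h : ℝ) ≠ 0 := mod_cast (hd.valency_pos hh).ne'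
  have hexpand : (p 0 h h * (θ * u h) : ℝ) • w
      = (p 0 h h * ∑ j ∈ range (D + 1), (p h 1 j : ℝ) * u j) • w := calc
    (p 0 h h * (θ * u h) : ℝ) • w = distMatrix G 1 *ᵥ (distMatrix G h *ᵥ w) := by
      rw [hd.distMatrix_mulVec_of_isStdSeq hu hw hh, mulVec_smul, hw, smul_smul]
      ring_nf
    _ = ∑ j ∈ range (D + 1), (p j 1 h * (p 0 j j * u j) : ℝ) • w := by
      rw [mulVec_mulVec, hd.distMatrix_mul_distMatrix hD hh, hd.boseMesnerMatrix_eq_sum,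
        sum_mulVec]
      refine sum_congr rfl fun j hj => ?_
      rw [smul_mulVec, hd.distMatrix_mulVec_of_isStdSeq hu hw (mem_range_succ_iff.1 hj), smul_smul]
    _ = (p 0 h h * ∑ j ∈ range (D + 1), (p h 1 j : ℝ) * u j) • w := by
      rw [← sum_smul, mul_sum]
      congr 1
      refine sum_congr rfl fun j hj => ?_
      have hkj : (p 0 h h * p h 1 j : ℝ) = p 0 j j * p j 1 h :=
        mod_cast hd.valency_mul_inter hh (mem_range_succ_iff.1 hj) hD
      linear_combination -u j * hkj
  exact (mul_left_cancel₀ hk (smul_left_injective ℝ hw₀ hexpand)).symm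

lemma distMatrix_one_mul_boseMesnerMatrix [DecidableRel G.Adj] (hd : IsDRG G D p) (hD : 1 ≤ D)
    (hu : IsStdSeq D p θ u) (hθ : IsAdjEigenval G θ) :
    distMatrix G 1 * boseMesnerMatrix G u = θ • boseMesnerMatrix G u := by
  ext x y
  rw [hd.boseMesnerMatrix_eq_sum, Matrix.mul_sum, Matrix.sum_apply, ← hd.boseMesnerMatrix_eq_sum]
  simp only [Matrix.smul_apply, smul_eq_mul, boseMesnerMatrix, of_apply]
  rw [← hd.sum_inter_one_mul_of_isStdSeq hD hu hθ (hd.dist_le x y)]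
  refine sum_congr rfl fun j hj => ?_
  rw [Matrix.mul_smul, hd.distMatrix_mul_distMatrix hD (mem_range_succ_iff.1 hj)]
  simp only [Matrix.smul_apply, smul_eq_mul, boseMesnerMatrix, of_apply, mul_comm]

lemma boseMesnerMatrix_mul_self [DecidableRel G.Adj] (hd : IsDRG G D p) (hD : 1 ≤ D)
    (hu : IsStdSeq D p θ u) (hθ : IsAdjEigenval G θ) :
    boseMesnerMatrix G u * boseMesnerMatrix G u
      = (∑ i ∈ range (D + 1), p 0 i i * u i ^ 2 : ℝ) • boseMesnerMatrix G u := by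
  refine ext_iff_mulVec.2 fun v => ?_
  have heig : distMatrix G 1 *ᵥ (boseMesnerMatrix G u *ᵥ v)
      = θ • (boseMesnerMatrix G u *ᵥ v) := by
    rw [mulVec_mulVec, hd.distMatrix_one_mul_boseMesnerMatrix hD hu hθ, smul_mulVec]
  rw [← mulVec_mulVec, smul_mulVec, sum_smul]
  nth_rw 1 [hd.boseMesnerMatrix_eq_sum u]
  rw [sum_mulVec]
  refine sum_congr rfl fun i hi => ?_
  rw [smul_mulVec, hd.distMatrix_mulVec_of_isStdSeq hu heig (mem_range_succ_iff.1 hi), smul_smul]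
  ring_nf

lemma posSemidef_boseMesnerMatrix [DecidableRel G.Adj] (hd : IsDRG G D p) (hD : 1 ≤ D)
    (hu : IsStdSeq D p θ u) (hθ : IsAdjEigenval G θ) : (boseMesnerMatrix G u).PosSemidef := by
  set s : ℝ := ∑ i ∈ range (D + 1), p 0 i i * u i ^ 2
  have hs₀ : 0 < s :=
    sum_pos' (fun i _ => by positivity) ⟨0, by simp, by simp [hd.valency_zero, hu.1]⟩
  have hgram : boseMesnerMatrix G u = s⁻¹ • ((boseMesnerMatrix G u)ᴴ * boseMesnerMatrix G u) := by
    rw [(isHermitian_boseMesnerMatrix G u).eq, hd.boseMesnerMatrix_mul_self hD hu hθ, smul_smul,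
      inv_mul_cancel₀ hs₀.ne', one_smul]
  rw [hgram]
  exact (posSemidef_conjTranspose_mul_self _).smul (inv_nonneg.2 hs₀.le)

end IsDRG

section CompleteBipartite

variable {V ι : Type*} [Fintype ι] {G : SimpleGraph V} {x y : ι → V} {f : ℕ → ℝ}

lemma sum_comp_dist_of_pairwise_dist_eq {d : ℕ} (hx : Pairwise fun i j => G.dist (x i) (x j) = d)
    (i : ι) : ∑ j, f (G.dist (x i) (x j)) = f 0 + (Fintype.card ι - 1) * f d := by
  classical
  rw [← add_sum_erase univ _ (mem_univ i), SimpleGraph.dist_self,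
    sum_congr rfl fun j hj => by rw [hx (ne_of_mem_erase hj).symm], sum_const,
    card_erase_of_mem (mem_univ i), card_univ, nsmul_eq_mul,
    Nat.cast_pred (Fintype.card_pos_iff.2 ⟨i⟩)]

-- The vector that is `1` on one side of `K_{r,r}` and `-1` on the other is an eigenvector of the
-- principal submatrix on these vertices.
lemma card_mul_le_of_posSemidef_boseMesnerMatrix [Nonempty ι]
    (hf : (boseMesnerMatrix G f).PosSemidef) (hx : Pairwise fun i j => G.dist (x i) (x j) = 2)
    (hy : Pairwise fun i j => G.dist (y i) (y j) = 2) (hxy : ∀ i j, G.Adj (x i) (y j)) :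
    Fintype.card ι * f 1 ≤ f 0 + (Fintype.card ι - 1) * f 2 := by
  set t : ℝ := f 0 + (Fintype.card ι - 1) * f 2 - Fintype.card ι * f 1 with ht
  set v : ι ⊕ ι → ℝ := Sum.elim 1 (-1) with hv
  have hxy₁ (i j) : G.dist (x i) (y j) = 1 := SimpleGraph.dist_eq_one_iff_adj.2 (hxy i j)
  have hyx₁ (i j) : G.dist (y i) (x j) = 1 := G.dist_comm.trans (hxy₁ j i)
  have heig : (boseMesnerMatrix G f).submatrix (Sum.elim x y) (Sum.elim x y) *ᵥ v = t • v := by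
    ext (i | i) <;>
      simp only [mulVec, dotProduct, boseMesnerMatrix, submatrix_apply, of_apply, hv,
        Fintype.sum_sum_type, Sum.elim_inl, Sum.elim_inr, Pi.one_apply, Pi.neg_apply, mul_neg,
        mul_one, sum_neg_distrib, hxy₁, hyx₁, sum_comp_dist_of_pairwise_dist_eq hx,
        sum_comp_dist_of_pairwise_dist_eq hy, sum_const, card_univ, nsmul_eq_mul, Pi.smul_apply,
        smul_eq_mul, ht] <;>
      ring
  have hnorm : v ⬝ᵥ v = 2 * Fintype.card ι := by
    simp [dotProduct, hv, two_mul]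
  have hquad : 0 ≤ t * (2 * Fintype.card ι) := calc
    0 ≤ star v ⬝ᵥ ((boseMesnerMatrix G f).submatrix (Sum.elim x y) (Sum.elim x y) *ᵥ v) :=
      (hf.submatrix (Sum.elim x y)).dotProduct_mulVec_nonneg v
    _ = t * (2 * Fintype.card ι) := by
      rw [heig, star_trivial, dotProduct_smul, hnorm, smul_eq_mul]
  have hcard : (0 : ℝ) < 2 * Fintype.card ι := by
    have := Fintype.card_pos (α := ι)
    positivity
  linarith [nonneg_of_mul_nonneg_left hquad hcard]

end CompleteBipartite

lemma apply_add_apply_swap_le_of_posSemidef {n : Type*} {M : Matrix n n ℝ} (hM : M.PosSemidef)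
    (a b : n) : M a b + M b a ≤ M a a + M b b := by
  have hquad := (hM.submatrix ![a, b]).dotProduct_mulVec_nonneg ![1, -1]
  simp only [star_trivial, mulVec, dotProduct, submatrix_apply, Fin.sum_univ_two, cons_val_zero,
    cons_val_one, one_mul, mul_one] at hquad
  linarith

section SecondEigenvalue

variable {V : Type*} [Fintype V] {G : SimpleGraph V} [DecidableRel G.Adj] {d : ℕ}

lemma eq_zero_of_adjMatrix_mulVec_eq_of_sum_eq_zero (hG : G.Connected)
    (hreg : G.IsRegularOfDegree d) {v : V → ℝ} (hv : G.adjMatrix ℝ *ᵥ v = (d : ℝ) • v)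
    (hsum : ∑ x, v x = 0) : v = 0 := by
  classical
  have hlap : G.lapMatrix ℝ *ᵥ v = 0 := by
    ext x
    rw [SimpleGraph.lapMatrix, sub_mulVec, hv]
    simp [SimpleGraph.degMatrix_mulVec_apply, hreg.degree_eq]
  have hconst := SimpleGraph.lapMatrix_mulVec_eq_zero_iff_forall_reachable G |>.1 hlap
  ext x
  have : Nonempty V := ⟨x⟩
  rw [sum_congr rfl fun z _ => hconst z x (hG.preconnected z x)] at hsum
  simpa using hsum

lemma sum_adjMatrix_mulVec_of_regular (hreg : G.IsRegularOfDegree d) (v : V → ℝ) :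
    ∑ x, (G.adjMatrix ℝ *ᵥ v) x = d * ∑ x, v x := by
  have h1A : 1 ᵥ* G.adjMatrix ℝ = fun _ => (d : ℝ) := by
    ext x
    simp [SimpleGraph.adjMatrix_vecMul_apply, hreg.degree_eq]
  rw [← one_dotProduct, dotProduct_mulVec, h1A, dotProduct, mul_sum]

-- The multiple of the all-ones matrix moves the eigenvalue `θ - d` of the constant vectors to `0`
-- and changes nothing on their orthogonal complement.
lemma posSemidef_smul_one_sub_adjMatrix_add [DecidableEq V] (hG : G.Connected)
    (hreg : G.IsRegularOfDegree d) {θ : ℝ}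
    (hmax : ∀ η : ℝ, IsAdjEigenval G η → η ≠ d → η ≤ θ) :
    (θ • (1 : Matrix V V ℝ) - G.adjMatrix ℝ
      + of fun _ _ => (d - θ) / Fintype.card V).PosSemidef := by
  have := hG.nonempty
  set N := θ • (1 : Matrix V V ℝ) - G.adjMatrix ℝ + of fun _ _ => (d - θ) / Fintype.card V with hN
  have hherm : N.IsHermitian := by
    ext x y
    simp [hN, SimpleGraph.adjMatrix_apply, G.adj_comm, one_apply, eq_comm]
  refine hherm.posSemidef_iff_eigenvalues_nonneg.2 fun i => ?_
  set μ := hherm.eigenvalues i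
  set v : V → ℝ := ⇑(hherm.eigenvectorBasis i)
  have hv₀ : v ≠ 0 := fun h =>
    hherm.eigenvectorBasis.orthonormal.ne_zero i (by ext x; exact congrFun h x)
  have hNv : N *ᵥ v = μ • v := hherm.mulVec_eigenvectorBasis i
  have hAv (x : V) : (G.adjMatrix ℝ *ᵥ v) x
      = (θ - μ) * v x + (d - θ) / Fintype.card V * ∑ z, v z := by
    have hx := congrFun hNv x
    simp only [hN, add_mulVec, sub_mulVec, smul_mulVec, one_mulVec, Pi.add_apply, Pi.sub_apply,
      Pi.smul_apply, smul_eq_mul] at hx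
    have hJ : ((of fun _ _ => (d - θ) / Fintype.card V : Matrix V V ℝ) *ᵥ v) x
        = (d - θ) / Fintype.card V * ∑ z, v z := by
      simp [mulVec, dotProduct, mul_sum]
    linear_combination hJ - hx
  have hsum : μ * ∑ x, v x = 0 := by
    have hd := sum_adjMatrix_mulVec_of_regular hreg v
    simp only [hAv, sum_add_distrib, ← mul_sum, sum_const, card_univ, nsmul_eq_mul] at hd
    field_simp at hd
    linarith
  by_contra! hμ₀ : μ < 0
  have hsum₀ : ∑ x, v x = 0 := (mul_eq_zero.1 hsum).resolve_left hμ₀.ne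
  have heig : G.adjMatrix ℝ *ᵥ v = (θ - μ) • v := by
    ext x
    simp [hAv, hsum₀]
  have hne : θ - μ ≠ d := fun h =>
    hv₀ (eq_zero_of_adjMatrix_mulVec_eq_of_sum_eq_zero hG hreg (h ▸ heig) hsum₀)
  linarith [hmax (θ - μ) ⟨v, hv₀, heig⟩ hne]

lemma nonneg_of_forall_isAdjEigenval_le (hG : G.Connected) (hreg : G.IsRegularOfDegree d) {θ : ℝ}
    (hmax : ∀ η : ℝ, IsAdjEigenval G η → η ≠ d → η ≤ θ) {a b : V} (hab : a ≠ b)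
    (hnadj : ¬ G.Adj a b) : 0 ≤ θ := by
  classical
  have hnadj' : ¬ G.Adj b a := fun h => hnadj h.symm
  have hab_le := apply_add_apply_swap_le_of_posSemidef
    (posSemidef_smul_one_sub_adjMatrix_add hG hreg hmax) a b
  simp only [Matrix.add_apply, Matrix.sub_apply, Matrix.smul_apply, smul_eq_mul, one_apply_eq,
    one_apply_ne hab, one_apply_ne hab.symm, SimpleGraph.adjMatrix_apply, SimpleGraph.irrefl,
    if_neg hnadj, if_neg hnadj', of_apply, if_false] at hab_le
  linarith

end SecondEigenvalue

lemma IsClassicalQType.mul_sub_succ {D i : ℕ} {q : ℝ} {u : ℕ → ℝ} (h : IsClassicalQType D q u)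
    (hq : q ≠ 0) (hi : i + 2 ≤ D) : q * (u (i + 1) - u (i + 2)) = u i - u (i + 1) := by
  obtain ⟨c, hc⟩ := h
  have h₁ := hc (i + 1) (by omega) (by omega)
  have h₂ := hc (i + 2) (by omega) hi
  simp only [Nat.add_sub_cancel, Nat.add_succ_sub_one] at h₁ h₂
  calc q * (u (i + 1) - u (i + 2))
      = q * (1 / q * (u i - u (i + 1))) := by linear_combination q * h₁ - q * h₂
    _ = u i - u (i + 1) := by field_simp

namespace IsDRG

variable {V : Type*} [Fintype V] {G : SimpleGraph V} {D : ℕ} {p : ℕ → ℕ → ℕ → ℕ} {θ : ℝ}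
  {u : ℕ → ℝ}

lemma stdSeq_one_lt_one [DecidableRel G.Adj] (hd : IsDRG G D p) (hD : 1 ≤ D)
    (hu : IsStdSeq D p θ u) (hθ : IsAdjEigenval G θ) (hθk : θ ≠ p 0 1 1) : u 1 < 1 := by
  obtain ⟨a, b, hab⟩ := hd.exists_dist_eq_left hD
  have hle : u 1 ≤ 1 := by
    simpa [hu.1] using card_mul_le_of_posSemidef_boseMesnerMatrix (ι := Unit) (x := fun _ => a)
      (y := fun _ => b) (hd.posSemidef_boseMesnerMatrix hD hu hθ) Subsingleton.pairwise
      Subsingleton.pairwise fun _ _ => SimpleGraph.dist_eq_one_iff_adj.1 hab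
  have hk : (p 0 1 1 : ℝ) ≠ 0 := mod_cast (hd.valency_pos hD).ne'
  exact hle.lt_of_ne fun h => hθk ((div_eq_one_iff_eq hk).1 (hu.2.1 ▸ h))

lemma inter_one_one_two_mul_stdSeq_sub (hd : IsDRG G D p) (hD : 2 ≤ D) (hu : IsStdSeq D p θ u) :
    p 1 1 2 * (u 1 - u 2) = (1 + θ) * (1 - u 1) := by
  obtain ⟨hu₀, hu₁, hrec⟩ := hu
  have hk : (p 0 1 1 : ℝ) ≠ 0 := mod_cast (hd.valency_pos (by omega)).ne'
  have hθ : p 0 1 1 * u 1 = θ := by rw [hu₁, mul_div_cancel₀ _ hk]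
  have hc : (p 1 1 0 : ℝ) = 1 := mod_cast hd.inter_one_one_zero (by omega)
  have hsum : (p 1 1 0 + p 1 1 1 + p 1 1 2 : ℝ) = p 0 1 1 :=
    mod_cast hd.inter_one_add_inter_one_add_inter_one (i := 0) hD
  have hrec₁ := hrec 1 le_rfl (by omega)
  simp only [Nat.sub_self, hu₀] at hrec₁
  linear_combination hθ + u 1 * hsum - hrec₁ + (1 - u 1) * hc

end IsDRG

theorem stmt14_general {V : Type*} [Fintype V] (G : SimpleGraph V) [DecidableRel G.Adj]
    (D : ℕ) (p : ℕ → ℕ → ℕ → ℕ) (hdrg : IsDRG G D p)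
    (q : ℝ) (hq : q ≠ 0)
    (θ : ℝ) (hθ : IsAdjEigenval G θ) (hθk : θ ≠ (p 0 1 1 : ℝ)) (hθ_gt : -1 < θ)
    (u : ℕ → ℝ) (hu : IsStdSeq D p θ u) (hct : IsClassicalQType D q u)
    (r : ℕ) (hr : 2 ≤ r) (x y : Fin r → V)
    (hxinj : Function.Injective x) (hyinj : Function.Injective y)
    (hadj : ∀ i j : Fin r, G.Adj (x i) (y j))
    (hxnadj : ∀ i j : Fin r, i ≠ j → ¬ G.Adj (x i) (x j))
    (hynadj : ∀ i j : Fin r, i ≠ j → ¬ G.Adj (y i) (y j)) :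
    (r : ℝ) - 1 ≤ q := by
  have : Nontrivial (Fin r) := Fin.nontrivial_iff_two_le.2 hr
  obtain ⟨i₀, i₁, hne⟩ := exists_pair_ne (Fin r)
  have hx₂ : Pairwise fun i j => G.dist (x i) (x j) = 2 := fun i j hij =>
    dist_eq_two_of_adj_of_adj (hxinj.ne hij) (hxnadj i j hij) (hadj i i₀) (hadj j i₀).symm
  have hy₂ : Pairwise fun i j => G.dist (y i) (y j) = 2 := fun i j hij =>
    dist_eq_two_of_adj_of_adj (hyinj.ne hij) (hynadj i j hij) (hadj i₀ i).symm (hadj i₀ j)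
  have hD : 2 ≤ D := hx₂ hne ▸ hdrg.dist_le (x i₀) (x i₁)
  have hbip : r * u 1 ≤ 1 + (r - 1) * u 2 := by
    simpa [hu.1] using card_mul_le_of_posSemidef_boseMesnerMatrix
      (hdrg.posSemidef_boseMesnerMatrix (by omega) hu hθ) hx₂ hy₂ hadj
  have hq_mul : q * (u 1 - u 2) = 1 - u 1 := hu.1 ▸ hct.mul_sub_succ hq hD
  have hpos : 0 < u 1 - u 2 := by
    have hu₁ : u 1 < 1 := hdrg.stdSeq_one_lt_one (by omega) hu hθ hθk
    have hb : 0 < p 1 1 2 * (u 1 - u 2) := by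
      rw [hdrg.inter_one_one_two_mul_stdSeq_sub hD hu]
      exact mul_pos (by linarith) (by linarith)
    exact pos_of_mul_pos_right hb (Nat.cast_nonneg _)
  refine le_of_mul_le_mul_right ?_ hpos
  linarith

/-- Let `Γ` be a distance-regular graph with `c₁ = 1` whose second largest distinct
adjacency eigenvalue `θ₁` is of classical `q`-type. If `Γ` contains an induced
`K_{r,r}` with `r ≥ 2`, then `q ≥ r - 1`. -/
theorem stmt14 {V : Type*} [Fintype V] (G : SimpleGraph V) [DecidableRel G.Adj]
    (D : ℕ) (p : ℕ → ℕ → ℕ → ℕ) (hdrg : IsDRG G D p)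
    (hc1 : p 1 1 0 = 1)
    (q : ℝ) (hq : q ≠ 0)
    (θ₁ : ℝ) (hθ₁ : IsAdjEigenval G θ₁) (hθ₁k : θ₁ ≠ (p 0 1 1 : ℝ))
    (hθ₁max : ∀ η : ℝ, IsAdjEigenval G η → η ≠ (p 0 1 1 : ℝ) → η ≤ θ₁)
    (u : ℕ → ℝ) (hu : IsStdSeq D p θ₁ u) (hct : IsClassicalQType D q u)
    (r : ℕ) (hr : 2 ≤ r) (x y : Fin r → V)
    (hxinj : Function.Injective x) (hyinj : Function.Injective y)
    (hxy : ∀ i j : Fin r, x i ≠ y j)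
    (hadj : ∀ i j : Fin r, G.Adj (x i) (y j))
    (hxnadj : ∀ i j : Fin r, i ≠ j → ¬ G.Adj (x i) (x j))
    (hynadj : ∀ i j : Fin r, i ≠ j → ¬ G.Adj (y i) (y j)) :
    (r : ℝ) - 1 ≤ q := by
  have : Nontrivial (Fin r) := Fin.nontrivial_iff_two_le.2 hr
  obtain ⟨i, j, hij⟩ := exists_pair_ne (Fin r)
  have hθ₁_nonneg : 0 ≤ θ₁ := nonneg_of_forall_isAdjEigenval_le hdrg.connected
    (hdrg.isRegularOfDegree (hdrg.one_le_diam_of_adj (hadj i j))) hθ₁max (hxinj.ne hij)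
    (hxnadj i j hij)
  exact stmt14_general G D p hdrg q hq θ₁ hθ₁ hθ₁k (neg_one_lt_zero.trans_le hθ₁_nonneg) u hu hct
    r hr x y hxinj hyinj hadj hxnadj hynadj
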